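/- Let n ≥ 2, let Ω ⊆ ℝⁿ be a convex open set, and let ξ : Ω → ℝ be smooth with ∂ᵢξ(x) ≠ 0 for every i and every x ∈ Ω. Let Φ, F : ℝ → ℝ be smooth functions such that Φ(s) ≠ 0 and (n−2)Φ'(s) + Φ(s)F'(s) ≠ 0 for every s in the image ξ(Ω), and suppose φ = Φ ∘ ξ and f = F ∘ ξ satisfy the conformal soliton system on Ω. Then there exist constants τ ∈ ℝ and α, β : Fin n → ℝ such that every point of Ω has an open neighborhood U ⊆ Ω on which ξ(x) = Ψ(Σₖ(τ·ε k·xₖ² + (α k)·xₖ + β k)) for some smooth function Ψ : ℝ → ℝ. (This is the 'only if' direction of Theorem 1.1: the only ansätze reducing the soliton PDE system to ODEs are functions of Σₖ(τ·ε k·xₖ² + α k·xₖ + β k).) -/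

import Mathlib

noncomputable def pd {n : ℕ} (i : Fin n) (u : (Fin n → ℝ) → ℝ) (x : Fin n → ℝ) : ℝ :=
  fderiv ℝ u x (Pi.single i 1)

/-- The PDE system characterizing gradient Ricci solitons conformal to
pseudo-Euclidean space (Barbosa–Pina–Tenenblat). -/
def SolitonSystem (n : ℕ) (ε : Fin n → ℝ) (Ω : Set (Fin n → ℝ))
    (φ f : (Fin n → ℝ) → ℝ) (lam : ℝ) : Prop :=
  (∀ i j : Fin n, i ≠ j → ∀ x ∈ Ω,
    ((n : ℝ) - 2) * pd i (pd j φ) x + φ x * pd i (pd j f) x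
      + pd i φ x * pd j f x + pd j φ x * pd i f x = 0) ∧
  (∀ i : Fin n, ∀ x ∈ Ω,
    φ x * (((n : ℝ) - 2) * pd i (pd i φ) x + φ x * pd i (pd i f) x
        + 2 * pd i φ x * pd i f x)
      + ε i * ∑ k, ε k * (φ x * pd k (pd k φ) x - ((n : ℝ) - 1) * (pd k φ x) ^ 2
        - φ x * pd k φ x * pd k f x) = ε i * lam)

/-- The reduced ODE system. -/
def ReducedODE (n : ℕ) (τ Λ lam : ℝ) (Φ F : ℝ → ℝ) (s : ℝ) : Prop :=
  ((n : ℝ) - 2) * deriv (deriv Φ) s + Φ s * deriv (deriv F) s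
      + 2 * deriv Φ s * deriv F s = 0 ∧
  2 * τ * Φ s * (2 * ((n : ℝ) - 1) * deriv Φ s + Φ s * deriv F s)
    + (Φ s * deriv (deriv Φ) s - ((n : ℝ) - 1) * (deriv Φ s) ^ 2
      - Φ s * deriv Φ s * deriv F s) * (4 * τ * s + Λ) = lam

/-!
Write `φ = Φ ∘ ξ`, `f = F ∘ ξ`, `A = (n-2)Φ' + ΦF'` and `B = (n-2)Φ'' + ΦF'' + 2Φ'F'`. By the chain
rule the off-diagonal equations say `A(ξ) ξᵢⱼ + B(ξ) ξᵢ ξⱼ = 0`, and the diagonal ones say that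
`A(ξ) ξᵢᵢ + B(ξ) ξᵢ²` is `εᵢ` times a function which does not depend on `i`. Now `A ≠ 0` on an open
interval containing `ξ(Ω)`, so there is a `G` on this interval with `G' = exp (∫ B/A) > 0`, and
hence `A G'' = B G'`. The Hessian of `u = G ∘ ξ` is then `m • diag ε` for a function `m`.

Since `n ≥ 2`, every index `j` has some `i ≠ j`, and `εᵢ ∂ⱼ m = ∂ᵢ ∂ⱼ ∂ᵢ u = 0`; hence `m` is a
constant `2τ`, and two integrations give `u = ∑ₖ (τ εₖ xₖ² + αₖ xₖ) + c`. Finally `ξ = G⁻¹ ∘ u`.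
-/

open Set Filter Topology
open scoped ContDiff

section PartialDerivatives

lemma differentiableAt_fderiv_of_contDiffAt_two {E F : Type*} [NormedAddCommGroup E]
    [NormedSpace ℝ E] [NormedAddCommGroup F] [NormedSpace ℝ F] {u : E → F} {x : E}
    (hu : ContDiffAt ℝ 2 u x) : DifferentiableAt ℝ (fderiv ℝ u) x :=
  (hu.fderiv_right (m := 1) one_add_one_eq_two.le).differentiableAt one_ne_zero

variable {n : ℕ} {Ω : Set (Fin n → ℝ)} {u v ξ : (Fin n → ℝ) → ℝ} {x : Fin n → ℝ}

lemma contDiffOn_pd {m k : ℕ∞ω} (hΩ : IsOpen Ω) (hu : ContDiffOn ℝ m u Ω) (hk : k + 1 ≤ m)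
    (i : Fin n) : ContDiffOn ℝ k (pd i u) Ω :=
  (hu.fderiv_of_isOpen hΩ hk).clm_apply contDiffOn_const

lemma differentiableAt_pd (hu : ContDiffAt ℝ 2 u x) (i : Fin n) :
    DifferentiableAt ℝ (pd i u) x :=
  (differentiableAt_fderiv_of_contDiffAt_two hu).clm_apply (differentiableAt_const _)

lemma pd_eq_of_eventuallyEq (h : u =ᶠ[𝓝 x] v) (i : Fin n) : pd i u x = pd i v x := by
  simp only [pd, h.fderiv_eq]

lemma pd_const (c : ℝ) (i : Fin n) : pd i (fun _ => c) x = 0 := by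
  simp [pd]

lemma pd_pd_comm (hu : ContDiffAt ℝ 2 u x) (i j : Fin n) :
    pd i (pd j u) x = pd j (pd i u) x := by
  have pd_pd_eq (k l : Fin n) :
      pd k (pd l u) x = fderiv ℝ (fderiv ℝ u) x (Pi.single k 1) (Pi.single l 1) := by
    change fderiv ℝ (fun y => fderiv ℝ u y (Pi.single l 1)) x _ = _
    simp [fderiv_clm_apply (differentiableAt_fderiv_of_contDiffAt_two hu)
      (differentiableAt_const _)]
  rw [pd_pd_eq, pd_pd_eq]
  exact hu.isSymmSndFDerivAt (by simp) _ _

lemma pd_mul (hu : DifferentiableAt ℝ u x) (hv : DifferentiableAt ℝ v x) (i : Fin n) :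
    pd i (fun y => u y * v y) x = pd i u x * v x + u x * pd i v x := by
  simp only [pd, fderiv_fun_mul hu hv, add_apply,
    smul_apply, smul_eq_mul]
  ring

lemma pd_comp {G : ℝ → ℝ} (hG : DifferentiableAt ℝ G (ξ x)) (hξ : DifferentiableAt ℝ ξ x)
    (i : Fin n) : pd i (G ∘ ξ) x = deriv G (ξ x) * pd i ξ x := by
  simp [pd, (hG.hasDerivAt.comp_hasFDerivAt x hξ.hasFDerivAt).fderiv]

lemma pd_pd_comp {G : ℝ → ℝ} (hG : ContDiffAt ℝ 2 G (ξ x)) (hξ : ContDiffAt ℝ 2 ξ x)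
    (i j : Fin n) :
    pd i (pd j (G ∘ ξ)) x
      = deriv (deriv G) (ξ x) * pd i ξ x * pd j ξ x + deriv G (ξ x) * pd i (pd j ξ) x := by
  have hdξ : DifferentiableAt ℝ ξ x := hξ.differentiableAt two_ne_zero
  have hdG' : DifferentiableAt ℝ (deriv G) (ξ x) :=
    (differentiableAt_fderiv_of_contDiffAt_two hG).clm_apply (differentiableAt_const 1)
  have pd_comp_near : pd j (G ∘ ξ) =ᶠ[𝓝 x] fun y => (deriv G ∘ ξ) y * pd j ξ y := by
    filter_upwards [hξ.eventually (by simp),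
      hξ.continuousAt.eventually (hG.eventually (by simp))] with y hξy hGy
    exact pd_comp (hGy.differentiableAt two_ne_zero) (hξy.differentiableAt two_ne_zero) j
  rw [pd_eq_of_eventuallyEq pd_comp_near,
    pd_mul (hdG'.comp x hdξ) (differentiableAt_pd hξ j), pd_comp hdG' hdξ, Function.comp_apply]

lemma pd_const_mul_apply (a : ℝ) (i j : Fin n) :
    pd j (fun y => a * y i) x = if i = j then a else 0 := by
  have h : HasFDerivAt (fun y : Fin n → ℝ => a * y i)
      (a • ContinuousLinearMap.proj (R := ℝ) (φ := fun _ : Fin n => ℝ) i) x :=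
    (hasFDerivAt_apply i x).const_mul a
  simp [pd, h.fderiv, Pi.single_apply]

lemma pd_sum_apply {g : Fin n → ℝ → ℝ} (hg : ∀ k, DifferentiableAt ℝ (g k) (x k)) (j : Fin n) :
    pd j (fun y => ∑ k, g k (y k)) x = deriv (g j) (x j) := by
  have h : HasFDerivAt (fun y : Fin n → ℝ => ∑ k, g k (y k))
      (∑ k, deriv (g k) (x k) •
        ContinuousLinearMap.proj (R := ℝ) (φ := fun _ : Fin n => ℝ) k) x :=
    HasFDerivAt.fun_sum fun k _ =>
      (hg k).hasDerivAt.comp_hasFDerivAt (f := fun y : Fin n → ℝ => y k) x (hasFDerivAt_apply k x)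
  simp [pd, h.fderiv, Pi.single_apply]

lemma exists_eq_add_const_of_pd_eq (hΩ : IsOpen Ω) (hΩc : IsPreconnected Ω)
    (hu : DifferentiableOn ℝ u Ω) (hv : DifferentiableOn ℝ v Ω)
    (h : ∀ x ∈ Ω, ∀ j, pd j u x = pd j v x) : ∃ c : ℝ, ∀ x ∈ Ω, u x = v x + c := by
  refine hΩ.exists_eq_add_of_fderiv_eq hΩc hu hv fun x hx => ?_
  refine ContinuousLinearMap.coe_injective (LinearMap.pi_ext' fun j => ?_)
  ext
  simpa [pd] using h x hx j

end PartialDerivatives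

section DiagonalHessian

variable {n : ℕ} {ε : Fin n → ℝ} {Ω : Set (Fin n → ℝ)} {u m : (Fin n → ℝ) → ℝ}

lemma exists_eq_const_of_hessian_eq_mul_diagonal (hn : 2 ≤ n) (hε : ∀ k, ε k ≠ 0)
    (hΩ : IsOpen Ω) (hΩc : IsPreconnected Ω) (hu : ContDiffOn ℝ 3 u Ω)
    (hess : ∀ i j, ∀ x ∈ Ω, pd i (pd j u) x = if i = j then ε i * m x else 0) :
    ∃ M : ℝ, ∀ x ∈ Ω, m x = M := by
  have : Nontrivial (Fin n) := Fin.nontrivial_iff_two_le.2 hn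
  have hdu (i : Fin n) : ContDiffOn ℝ 2 (pd i u) Ω := contDiffOn_pd hΩ hu (by norm_num) i
  have m_eq (i : Fin n) : EqOn m (fun x => (ε i)⁻¹ * pd i (pd i u) x) Ω := fun x hx => by
    simp [hess i i x hx, hε i]
  have m_diff : DifferentiableOn ℝ m Ω :=
    (((contDiffOn_pd hΩ (hdu _) one_add_one_eq_two.le _).differentiableOn one_ne_zero).const_mul
      _).congr (m_eq ⟨0, by omega⟩)
  have pd_m_eq_zero (x) (hx : x ∈ Ω) (j : Fin n) : pd j m x = 0 := by
    obtain ⟨i, hij⟩ := exists_ne j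
    have hnhds : Ω ∈ 𝓝 x := hΩ.mem_nhds hx
    have hduᵢ : ContDiffAt ℝ 2 (pd i u) x := (hdu i).contDiffAt hnhds
    have mixed_eq_zero : pd j (pd i u) =ᶠ[𝓝 x] fun _ => 0 := by
      filter_upwards [hnhds] with y hy using by rw [hess j i y hy, if_neg hij.symm]
    calc pd j m x = (ε i)⁻¹ * pd j (pd i (pd i u)) x := by
          rw [pd_eq_of_eventuallyEq ((m_eq i).eventuallyEq_of_mem hnhds),
            pd_mul (differentiableAt_const _) (differentiableAt_pd hduᵢ i), pd_const]
          ring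
      _ = (ε i)⁻¹ * pd i (pd j (pd i u)) x := by rw [pd_pd_comm hduᵢ]
      _ = 0 := by rw [pd_eq_of_eventuallyEq mixed_eq_zero, pd_const, mul_zero]
  obtain ⟨M, hM⟩ := exists_eq_add_const_of_pd_eq hΩ hΩc m_diff (differentiableOn_const 0)
    fun x hx j => by rw [pd_m_eq_zero x hx, pd_const]
  exact ⟨M, fun x hx => by rw [hM x hx, zero_add]⟩

lemma exists_eq_quadratic_of_hessian_eq_mul_diagonal (hn : 2 ≤ n) (hε : ∀ k, ε k ≠ 0)
    (hΩ : IsOpen Ω) (hΩc : IsPreconnected Ω) (hu : ContDiffOn ℝ 3 u Ω)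
    (hess : ∀ i j, ∀ x ∈ Ω, pd i (pd j u) x = if i = j then ε i * m x else 0) :
    ∃ (τ : ℝ) (α : Fin n → ℝ) (c : ℝ), ∀ x ∈ Ω,
      u x = ∑ k, (τ * ε k * x k ^ 2 + α k * x k) + c := by
  obtain ⟨M, hM⟩ := exists_eq_const_of_hessian_eq_mul_diagonal hn hε hΩ hΩc hu hess
  have pd_affine (i : Fin n) : ∃ a : ℝ, ∀ x ∈ Ω, pd i u x = ε i * M * x i + a := by
    refine exists_eq_add_const_of_pd_eq hΩ hΩc
      ((contDiffOn_pd hΩ hu (k := 2) (by norm_num) i).differentiableOn two_ne_zero)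
      (by fun_prop) fun x hx j => ?_
    rw [pd_const_mul_apply, hess j i x hx, hM x hx]
    grind
  choose α hα using pd_affine
  obtain ⟨c, hc⟩ := exists_eq_add_const_of_pd_eq hΩ hΩc (hu.differentiableOn three_ne_zero)
    (v := fun x => ∑ k, (M / 2 * ε k * x k ^ 2 + α k * x k)) (by fun_prop) fun x hx j => by
      rw [hα j x hx, pd_sum_apply (g := fun k t => M / 2 * ε k * t ^ 2 + α k * t)
        (fun k => by fun_prop), deriv_fun_add (by fun_prop) (by fun_prop)]
      simp
      ring
  exact ⟨M / 2, α, c, hc⟩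

end DiagonalHessian

section OneVariable

lemma exists_isOpen_isPreconnected_between {X : Type*} [TopologicalSpace X]
    [LocallyConnectedSpace X] {s W : Set X} (hs : IsPreconnected s) (hW : IsOpen W) (hsW : s ⊆ W) :
    ∃ I, IsOpen I ∧ IsPreconnected I ∧ s ⊆ I ∧ I ⊆ W := by
  rcases s.eq_empty_or_nonempty with rfl | ⟨x, hx⟩
  · exact ⟨∅, isOpen_empty, isPreconnected_empty, Subset.rfl, empty_subset W⟩
  · exact ⟨connectedComponentIn W x, hW.connectedComponentIn, isPreconnected_connectedComponentIn,
      hs.subset_connectedComponentIn hx hsW, connectedComponentIn_subset W x⟩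

variable {E : Type*} [NormedAddCommGroup E] [NormedSpace ℝ E]

lemma exists_hasDerivAt_of_continuousOn [CompleteSpace E] {I : Set ℝ} (hI : IsOpen I)
    (hIc : I.OrdConnected) {h : ℝ → E} (hh : ContinuousOn h I) :
    ∃ H : ℝ → E, ∀ s ∈ I, HasDerivAt H (h s) s := by
  rcases I.eq_empty_or_nonempty with rfl | ⟨s₀, hs₀⟩
  · exact ⟨0, by simp⟩
  · exact ⟨fun t => ∫ y in s₀..t, h y, fun s hs =>
      intervalIntegral.integral_hasDerivAt_right
        (hh.mono (hIc.uIcc_subset hs₀ hs)).intervalIntegrable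
        (hh.stronglyMeasurableAtFilter hI s hs) (hh.continuousAt (hI.mem_nhds hs))⟩

lemma contDiffOn_infty_of_hasDerivAt {I : Set ℝ} (hI : IsOpen I) {H h : ℝ → E}
    (hH : ∀ s ∈ I, HasDerivAt H (h s) s) (hh : ContDiffOn ℝ ∞ h I) : ContDiffOn ℝ ∞ H I :=
  (contDiffOn_infty_iff_deriv_of_isOpen hI).2
    ⟨fun s hs => (hH s hs).differentiableAt.differentiableWithinAt,
      hh.congr fun s hs => (hH s hs).deriv⟩

lemma exists_deriv_pos_and_mul_deriv_deriv_eq {I : Set ℝ} (hI : IsOpen I) (hIc : I.OrdConnected)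
    {A B : ℝ → ℝ} (hA : ContDiffOn ℝ ∞ A I) (hB : ContDiffOn ℝ ∞ B I) (hA0 : ∀ s ∈ I, A s ≠ 0) :
    ∃ G : ℝ → ℝ, ContDiffOn ℝ ∞ G I ∧
      ∀ s ∈ I, 0 < deriv G s ∧ A s * deriv (deriv G) s = B s * deriv G s := by
  have hBA : ContDiffOn ℝ ∞ (fun s => B s / A s) I := hB.div hA hA0
  obtain ⟨H, hH⟩ := exists_hasDerivAt_of_continuousOn hI hIc hBA.continuousOn
  have hexpH : ContDiffOn ℝ ∞ (fun s => Real.exp (H s)) I :=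
    (contDiffOn_infty_of_hasDerivAt hI hH hBA).exp
  obtain ⟨G, hG⟩ := exists_hasDerivAt_of_continuousOn hI hIc hexpH.continuousOn
  refine ⟨G, contDiffOn_infty_of_hasDerivAt hI hG hexpH, fun s hs => ?_⟩
  have deriv_G : deriv G =ᶠ[𝓝 s] fun t => Real.exp (H t) := by
    filter_upwards [hI.mem_nhds hs] with t ht using (hG t ht).deriv
  have := hA0 s hs
  rw [deriv_G.deriv_eq, (hH s hs).exp.deriv, deriv_G.self_of_nhds]
  exact ⟨Real.exp_pos _, by field_simp⟩

end OneVariable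

section InverseAndExtension

variable {E F : Type*} [NormedAddCommGroup E] [NormedSpace ℝ E] [NormedAddCommGroup F]
  [NormedSpace ℝ F]

lemma isOpen_image_of_hasStrictDerivAt {𝕜 : Type*} [NontriviallyNormedField 𝕜] [CompleteSpace 𝕜]
    {s : Set 𝕜} (hs : IsOpen s) {f f' : 𝕜 → 𝕜} (hf : ∀ a ∈ s, HasStrictDerivAt f (f' a) a)
    (hf' : ∀ a ∈ s, f' a ≠ 0) : IsOpen (f '' s) := by
  rw [isOpen_iff_mem_nhds]
  rintro _ ⟨a, ha, rfl⟩
  rw [← (hf a ha).map_nhds_eq (hf' a ha)]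
  exact image_mem_map (hs.mem_nhds ha)

lemma contDiffOn_image_of_leftInvOn {𝕜 : Type*} [RCLike 𝕜] {s : Set 𝕜} (hs : IsOpen s)
    {f g : 𝕜 → 𝕜} {m : ℕ∞ω} (hm : m ≠ 0) (hf : ContDiffOn 𝕜 m f s)
    (hf' : ∀ a ∈ s, deriv f a ≠ 0) (hg : LeftInvOn g f s) : ContDiffOn 𝕜 m g (f '' s) := by
  rintro _ ⟨a, ha, rfl⟩
  have hfa : ContDiffAt 𝕜 m f a := hf.contDiffAt (hs.mem_nhds ha)
  have hda := (hfa.differentiableAt hm).hasDerivAt.hasFDerivAt_equiv (hf' a ha)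
  have g_eq_localInverse := (hfa.hasStrictFDerivAt' hda hm).localInverse_unique
    (hg.eqOn.eventuallyEq_of_mem (hs.mem_nhds ha))
  exact ((hfa.to_localInverse hda hm).congr_of_eventuallyEq g_eq_localInverse).contDiffWithinAt

lemma exists_contDiff_eventuallyEq [HasContDiffBump E] {s : Set E}
    (hs : IsOpen s) {m : ℕ∞} {f : E → F} (hf : ContDiffOn ℝ m f s) {a : E} (ha : a ∈ s) :
    ∃ g : E → F, ContDiff ℝ m g ∧ g =ᶠ[𝓝 a] f := by
  obtain ⟨r, hr, hrs⟩ := Metric.nhds_basis_closedBall.mem_iff.1 (hs.mem_nhds ha)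
  let χ : ContDiffBump a := ⟨r / 2, r, half_pos hr, half_lt_self hr⟩
  refine ⟨fun x => χ x • f x, contMDiff_iff_contDiff.1 (contMDiff_of_tsupport
    fun x hx => contMDiffAt_iff_contDiffAt.2 ?_), ?_⟩
  · have hxs : x ∈ s := hrs (χ.tsupport_eq ▸ tsupport_smul_subset_left χ f hx)
    exact χ.contDiffAt.smul (hf.contDiffAt (hs.mem_nhds hxs))
  · filter_upwards [χ.eventuallyEq_one] with x hx
    simp [hx]

lemma exists_contDiff_local_factorization {X : Type*} [TopologicalSpace X] [HasContDiffBump E]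
    {Ω : Set X} (hΩ : IsOpen Ω) {q : X → E} (hq : ContinuousOn q Ω) {J : Set E} (hJ : IsOpen J)
    {m : ℕ∞} {Ψ : E → F} (hΨ : ContDiffOn ℝ m Ψ J) {ξ : X → F}
    (h : ∀ x ∈ Ω, q x ∈ J ∧ ξ x = Ψ (q x)) {p : X} (hp : p ∈ Ω) :
    ∃ U : Set X, IsOpen U ∧ p ∈ U ∧ U ⊆ Ω ∧
      ∃ Ψ' : E → F, ContDiff ℝ m Ψ' ∧ ∀ x ∈ U, ξ x = Ψ' (q x) := by
  obtain ⟨Ψ', hΨ', hEq⟩ := exists_contDiff_eventuallyEq hJ hΨ (h p hp).1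
  obtain ⟨V, hVeq, hV, hpV⟩ := eventually_nhds_iff.1 hEq
  refine ⟨Ω ∩ q ⁻¹' V, hq.isOpen_inter_preimage hΩ hV, ⟨hp, hpV⟩, inter_subset_left, Ψ', hΨ', ?_⟩
  rintro x ⟨hx, hxV⟩
  rw [(h x hx).2, hVeq _ hxV]

end InverseAndExtension

section SolitonTensor

/-- The `(i, j)` entry of the symmetric tensor `(n-2) ∇²φ + φ ∇²f + dφ ⊗ df + df ⊗ dφ`, the part of
the conformal soliton system which is not a multiple of the metric. -/
noncomputable def solitonTensor {n : ℕ} (φ f : (Fin n → ℝ) → ℝ) (i j : Fin n) (x : Fin n → ℝ) :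
    ℝ :=
  ((n : ℝ) - 2) * pd i (pd j φ) x + φ x * pd i (pd j f) x + pd i φ x * pd j f x
    + pd j φ x * pd i f x

/-- The coefficient `A = (n-2)Φ' + ΦF'` of `∇²ξ` in the soliton tensor of `Φ ∘ ξ` and `F ∘ ξ`. -/
noncomputable def hessianCoeff (n : ℕ) (Φ F : ℝ → ℝ) (s : ℝ) : ℝ :=
  ((n : ℝ) - 2) * deriv Φ s + Φ s * deriv F s

/-- The coefficient `B = (n-2)Φ'' + ΦF'' + 2Φ'F'` of `dξ ⊗ dξ` in the soliton tensor of `Φ ∘ ξ` and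
`F ∘ ξ`. -/
noncomputable def gradientCoeff (n : ℕ) (Φ F : ℝ → ℝ) (s : ℝ) : ℝ :=
  ((n : ℝ) - 2) * deriv (deriv Φ) s + Φ s * deriv (deriv F) s + 2 * deriv Φ s * deriv F s

lemma contDiffOn_hessianCoeff (n : ℕ) {D : Set ℝ} (hD : IsOpen D) {Φ F : ℝ → ℝ}
    (hΦ : ContDiffOn ℝ ∞ Φ D) (hF : ContDiffOn ℝ ∞ F D) :
    ContDiffOn ℝ ∞ (hessianCoeff n Φ F) D :=
  (contDiffOn_const.mul (hΦ.deriv_of_isOpen hD le_rfl)).add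
    (hΦ.mul (hF.deriv_of_isOpen hD le_rfl))

lemma contDiffOn_gradientCoeff (n : ℕ) {D : Set ℝ} (hD : IsOpen D) {Φ F : ℝ → ℝ}
    (hΦ : ContDiffOn ℝ ∞ Φ D) (hF : ContDiffOn ℝ ∞ F D) :
    ContDiffOn ℝ ∞ (gradientCoeff n Φ F) D := by
  have hΦ' : ContDiffOn ℝ ∞ (deriv Φ) D := hΦ.deriv_of_isOpen hD le_rfl
  have hF' : ContDiffOn ℝ ∞ (deriv F) D := hF.deriv_of_isOpen hD le_rfl
  exact ((contDiffOn_const.mul (hΦ'.deriv_of_isOpen hD le_rfl)).add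
    (hΦ.mul (hF'.deriv_of_isOpen hD le_rfl))).add ((contDiffOn_const.mul hΦ').mul hF')

variable {n : ℕ} {ξ : (Fin n → ℝ) → ℝ} {Φ F : ℝ → ℝ} {x : Fin n → ℝ}

lemma solitonTensor_comp (hξ : ContDiffAt ℝ 2 ξ x) (hΦ : ContDiffAt ℝ 2 Φ (ξ x))
    (hF : ContDiffAt ℝ 2 F (ξ x)) (i j : Fin n) :
    solitonTensor (Φ ∘ ξ) (F ∘ ξ) i j x = hessianCoeff n Φ F (ξ x) * pd i (pd j ξ) x
      + gradientCoeff n Φ F (ξ x) * pd i ξ x * pd j ξ x := by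
  have hdξ := hξ.differentiableAt two_ne_zero
  have hdΦ := hΦ.differentiableAt two_ne_zero
  have hdF := hF.differentiableAt two_ne_zero
  simp only [solitonTensor, hessianCoeff, gradientCoeff, pd_pd_comp hΦ hξ, pd_pd_comp hF hξ,
    pd_comp hdΦ hdξ, pd_comp hdF hdξ, Function.comp_apply]
  ring

lemma pd_pd_comp_eq_mul_solitonTensor (hξ : ContDiffAt ℝ 2 ξ x) (hΦ : ContDiffAt ℝ 2 Φ (ξ x))
    (hF : ContDiffAt ℝ 2 F (ξ x)) (hA : hessianCoeff n Φ F (ξ x) ≠ 0) {G : ℝ → ℝ}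
    (hG : ContDiffAt ℝ 2 G (ξ x))
    (hG' : hessianCoeff n Φ F (ξ x) * deriv (deriv G) (ξ x)
      = gradientCoeff n Φ F (ξ x) * deriv G (ξ x)) (i j : Fin n) :
    pd i (pd j (G ∘ ξ)) x
      = deriv G (ξ x) / hessianCoeff n Φ F (ξ x) * solitonTensor (Φ ∘ ξ) (F ∘ ξ) i j x := by
  rw [pd_pd_comp hG hξ, solitonTensor_comp hξ hΦ hF]
  field_simp
  linear_combination pd i ξ x * pd j ξ x * hG'

lemma SolitonSystem.exists_solitonTensor_eq {ε : Fin n → ℝ} {Ω : Set (Fin n → ℝ)}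
    {φ f : (Fin n → ℝ) → ℝ} {lam : ℝ} (h : SolitonSystem n ε Ω φ f lam) (hφ : ∀ x ∈ Ω, φ x ≠ 0) :
    ∃ μ : (Fin n → ℝ) → ℝ, ∀ i j, ∀ x ∈ Ω,
      solitonTensor φ f i j x = if i = j then ε i * μ x else 0 := by
  refine ⟨fun x => (lam - ∑ k, ε k * (φ x * pd k (pd k φ) x - ((n : ℝ) - 1) * (pd k φ x) ^ 2
    - φ x * pd k φ x * pd k f x)) / φ x, fun i j x hx => ?_⟩
  split_ifs with hij
  · subst hij
    have := hφ x hx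
    rw [solitonTensor]
    field_simp
    linear_combination h.2 i x hx
  · exact h.1 i j hij x hx

lemma SolitonSystem.exists_comp_hessian_eq_mul_diagonal {ε : Fin n → ℝ} {Ω : Set (Fin n → ℝ)}
    {lam : ℝ} (hSol : SolitonSystem n ε Ω (Φ ∘ ξ) (F ∘ ξ) lam) (hΩ : IsOpen Ω)
    (hΩc : IsPreconnected Ω) (hξ : ContDiffOn ℝ ∞ ξ Ω) {D : Set ℝ} (hD : IsOpen D)
    (hξD : MapsTo ξ Ω D) (hΦ : ContDiffOn ℝ ∞ Φ D) (hF : ContDiffOn ℝ ∞ F D)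
    (hΦ0 : ∀ x ∈ Ω, Φ (ξ x) ≠ 0) (hA : ∀ x ∈ Ω, hessianCoeff n Φ F (ξ x) ≠ 0) :
    ∃ (I : Set ℝ) (G : ℝ → ℝ), IsOpen I ∧ I.OrdConnected ∧ MapsTo ξ Ω I ∧ ContDiffOn ℝ ∞ G I ∧
      (∀ s ∈ I, 0 < deriv G s) ∧ ∃ m : (Fin n → ℝ) → ℝ, ∀ i j, ∀ x ∈ Ω,
        pd i (pd j (G ∘ ξ)) x = if i = j then ε i * m x else 0 := by
  have hAs := contDiffOn_hessianCoeff n hD hΦ hF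
  obtain ⟨I, hI, hIc, hξI, hID⟩ := exists_isOpen_isPreconnected_between
    (hΩc.image ξ hξ.continuousOn) (hAs.continuousOn.isOpen_inter_preimage hD isOpen_compl_singleton)
    (image_subset_iff.2 fun x hx => ⟨hξD hx, hA x hx⟩)
  have hID' : I ⊆ D := hID.trans inter_subset_left
  replace hξI : MapsTo ξ Ω I := mapsTo_iff_image_subset.2 hξI
  obtain ⟨G, hG, hG'⟩ := exists_deriv_pos_and_mul_deriv_deriv_eq hI hIc.ordConnected
    (hAs.mono hID') ((contDiffOn_gradientCoeff n hD hΦ hF).mono hID') fun s hs => (hID hs).2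
  obtain ⟨μ, hμ⟩ := hSol.exists_solitonTensor_eq hΦ0
  refine ⟨I, G, hI, hIc.ordConnected, hξI, hG, fun s hs => (hG' s hs).1,
    fun x => deriv G (ξ x) / hessianCoeff n Φ F (ξ x) * μ x, fun i j x hx => ?_⟩
  have hDx : D ∈ 𝓝 (ξ x) := hD.mem_nhds (hξD hx)
  have hξ₂ : ContDiffAt ℝ 2 ξ x := (hξ.contDiffAt (hΩ.mem_nhds hx)).of_le ENat.LEInfty.out
  have hΦ₂ : ContDiffAt ℝ 2 Φ (ξ x) := (hΦ.contDiffAt hDx).of_le ENat.LEInfty.out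
  have hF₂ : ContDiffAt ℝ 2 F (ξ x) := (hF.contDiffAt hDx).of_le ENat.LEInfty.out
  have hG₂ : ContDiffAt ℝ 2 G (ξ x) :=
    (hG.contDiffAt (hI.mem_nhds (hξI hx))).of_le ENat.LEInfty.out
  rw [pd_pd_comp_eq_mul_solitonTensor hξ₂ hΦ₂ hF₂ (hA x hx) hG₂ (hG' _ (hξI hx)).2, hμ i j x hx,
    mul_ite, mul_zero, mul_left_comm]

end SolitonTensor

theorem stmt_2_general {n : ℕ} (hn : 2 ≤ n) {ε : Fin n → ℝ} (hε : ∀ k, ε k ≠ 0)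
    {Ω : Set (Fin n → ℝ)} (hΩ : IsOpen Ω) (hΩc : IsPreconnected Ω) {lam : ℝ}
    {ξ : (Fin n → ℝ) → ℝ} (hξ : ContDiffOn ℝ ∞ ξ Ω) {D : Set ℝ} (hD : IsOpen D)
    (hξD : MapsTo ξ Ω D) {Φ F : ℝ → ℝ} (hΦ : ContDiffOn ℝ ∞ Φ D) (hF : ContDiffOn ℝ ∞ F D)
    (hΦ0 : ∀ x ∈ Ω, Φ (ξ x) ≠ 0)
    (hA : ∀ x ∈ Ω, ((n : ℝ) - 2) * deriv Φ (ξ x) + Φ (ξ x) * deriv F (ξ x) ≠ 0)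
    (hSol : SolitonSystem n ε Ω (Φ ∘ ξ) (F ∘ ξ) lam) :
    ∃ (τ : ℝ) (α β : Fin n → ℝ) (J : Set ℝ) (Ψ : ℝ → ℝ), IsOpen J ∧ ContDiffOn ℝ ∞ Ψ J ∧
      ∀ x ∈ Ω, ∑ k, (τ * ε k * x k ^ 2 + α k * x k + β k) ∈ J ∧
        ξ x = Ψ (∑ k, (τ * ε k * x k ^ 2 + α k * x k + β k)) := by
  obtain ⟨I, G, hI, hIc, hξI, hG, hG', m, hess⟩ :=
    hSol.exists_comp_hessian_eq_mul_diagonal hΩ hΩc hξ hD hξD hΦ hF hΦ0 hA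
  obtain ⟨τ, α, c, hq⟩ := exists_eq_quadratic_of_hessian_eq_mul_diagonal hn hε hΩ hΩc
    ((hG.comp hξ hξI).of_le ENat.LEInfty.out) hess
  have hsum (x) (hx : x ∈ Ω) : ∑ k, (τ * ε k * x k ^ 2 + α k * x k + c / n) = G (ξ x) := by
    have hn0 : (n : ℝ) ≠ 0 := by positivity
    rw [Finset.sum_add_distrib, ← Function.comp_apply (f := G), hq x hx]
    simp [mul_div_cancel₀, hn0]
  have hinv : LeftInvOn (Function.invFunOn G I) G I :=
    (strictMonoOn_of_deriv_pos hIc.convex hG.continuousOn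
      fun s hs => hG' s (interior_subset hs)).injOn.leftInvOn_invFunOn
  have hG0 (s) (hs : s ∈ I) : deriv G s ≠ 0 := (hG' s hs).ne'
  refine ⟨τ, α, fun _ => c / n, G '' I, Function.invFunOn G I,
    isOpen_image_of_hasStrictDerivAt hI
      (fun s hs => (hG.contDiffAt (hI.mem_nhds hs)).hasStrictDerivAt (by simp)) hG0,
    contDiffOn_image_of_leftInvOn hI (by simp) hG hG0 hinv, fun x hx => ?_⟩
  rw [hsum x hx]
  exact ⟨mem_image_of_mem G (hξI hx), (hinv (hξI hx)).symm⟩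

/-- **Theorem 1.1, "only if" direction.** The only ansätze reducing the conformal soliton
PDE system to ODEs are (locally) functions of `∑ₖ (τ εₖ xₖ² + αₖ xₖ + βₖ)`. -/
theorem stmt_2 (n : ℕ) (hn : 2 ≤ n) (ε : Fin n → ℝ)
    (hε : ∀ k, ε k = 1 ∨ ε k = -1)
    (Ω : Set (Fin n → ℝ)) (hΩ : IsOpen Ω) (hconv : Convex ℝ Ω)
    (lam : ℝ)
    (ξ : (Fin n → ℝ) → ℝ) (hξ : ContDiffOn ℝ (⊤ : ℕ∞) ξ Ω)
    (hξ' : ∀ i : Fin n, ∀ x ∈ Ω, pd i ξ x ≠ 0)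
    (Φ F : ℝ → ℝ) (hΦ : ContDiff ℝ (⊤ : ℕ∞) Φ) (hF : ContDiff ℝ (⊤ : ℕ∞) F)
    (hΦ0 : ∀ s ∈ ξ '' Ω, Φ s ≠ 0)
    (hnd : ∀ s ∈ ξ '' Ω, ((n : ℝ) - 2) * deriv Φ s + Φ s * deriv F s ≠ 0)
    (hSol : SolitonSystem n ε Ω (Φ ∘ ξ) (F ∘ ξ) lam) :
    ∃ (τ : ℝ) (α β : Fin n → ℝ), ∀ p ∈ Ω, ∃ U : Set (Fin n → ℝ),
      IsOpen U ∧ p ∈ U ∧ U ⊆ Ω ∧ ∃ Ψ : ℝ → ℝ, ContDiff ℝ (⊤ : ℕ∞) Ψ ∧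
        ∀ x ∈ U, ξ x = Ψ (∑ k, (τ * ε k * (x k) ^ 2 + α k * x k + β k)) := by
  obtain ⟨τ, α, β, J, Ψ, hJ, hΨ, h⟩ := stmt_2_general hn
    (fun k => by rcases hε k with h | h <;> simp [h]) hΩ hconv.isPreconnected hξ isOpen_univ
    (mapsTo_univ ξ Ω) hΦ.contDiffOn hF.contDiffOn (fun x hx => hΦ0 _ (mem_image_of_mem ξ hx))
    (fun x hx => hnd _ (mem_image_of_mem ξ hx)) hSol
  exact ⟨τ, α, β, fun p hp =>
    exists_contDiff_local_factorization hΩ (by fun_prop) hJ hΨ h hp⟩
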